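/- Let m = 2k with k ≥ 3, and let u ∈ (ZMod 2)^m be a signature satisfying u_{i+k} ≠ u_i for all 0 ≤ i ≤ k−1. Let a be the arc of the Walecki tournament W_u between the vertices 0 and m. Then d(a) = 1, and consequently every automorphism of W_u fixes the vertex *, and any isomorphism from W_u to another Walecki tournament W_v maps the vertex * of W_u to the vertex * of W_v. -/

import Mathlib

/-- Vertex set of the Walecki tournament on `2*m+1` vertices:
`ZMod (2*m)` together with the extra vertex `*`, encoded as `none`. -/
abbrev WVert (m : ℕ) := Option (ZMod (2 * m))

/-- The arc relation of the directed Hamilton cycle `C_j⁺`: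
it has arcs `(*, j)` and `(j+m, *)`, together with the arcs `(j−k, j+k+1)` for
`0 ≤ k ≤ m−1` and `(j+k, j−k)` for `1 ≤ k ≤ m−1` (arithmetic in `ZMod (2*m)`). -/
def Cplus (m : ℕ) (j : ZMod (2 * m)) (x y : WVert m) : Prop :=
  (x = none ∧ y = some j) ∨
  (x = some (j + (m : ZMod (2 * m))) ∧ y = none) ∨
  (∃ k : ℕ, k ≤ m - 1 ∧ x = some (j - (k : ZMod (2 * m))) ∧
    y = some (j + (k : ZMod (2 * m)) + 1)) ∨
  (∃ k : ℕ, 1 ≤ k ∧ k ≤ m - 1 ∧ x = some (j + (k : ZMod (2 * m))) ∧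
    y = some (j - (k : ZMod (2 * m))))

/-- The arc relation of the Walecki tournament `W_u` with signature `u ∈ (ZMod 2)^m`:
the arcs of `C_j⁺` when `u_j = 1`, and the arcs of `C_j⁻` (the reverse of `C_j⁺`)
when `u_j = 0`, for `0 ≤ j ≤ m−1`. -/
def warc (m : ℕ) (u : Fin m → ZMod 2) (x y : WVert m) : Prop :=
  ∃ j : Fin m, (u j = 1 ∧ Cplus m ((j : ℕ) : ZMod (2 * m)) x y) ∨
               (u j = 0 ∧ Cplus m ((j : ℕ) : ZMod (2 * m)) y x)

/-- `d(a)` for the arc `a = (x,y)`: the number of vertices `z ≠ x, y` such that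
`(y,z)` and `(z,x)` are both arcs, i.e. `x, y, z` span a directed triangle. -/
noncomputable def dcount {α : Type*} (arc : α → α → Prop) (x y : α) : ℕ :=
  {z : α | z ≠ x ∧ z ≠ y ∧ arc y z ∧ arc z x}.ncard

/-- `i(a)` for the arc `a = (x,y)`: the number of vertices `z ≠ x, y` with arcs
`(z,x)` and `(z,y)`. -/
noncomputable def icount {α : Type*} (arc : α → α → Prop) (x y : α) : ℕ :=
  {z : α | z ≠ x ∧ z ≠ y ∧ arc z x ∧ arc z y}.ncard

/-- `o(a)` for the arc `a = (x,y)`: the number of vertices `z ≠ x, y` with arcs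
`(x,z)` and `(y,z)`. -/
noncomputable def ocount {α : Type*} (arc : α → α → Prop) (x y : α) : ℕ :=
  {z : α | z ≠ x ∧ z ≠ y ∧ arc x z ∧ arc y z}.ncard

/-- `b(a)` for the arc `a = (x,y)`: the number of vertices `z ≠ x, y` with arcs
`(x,z)` and `(z,y)`. -/
noncomputable def bcount {α : Type*} (arc : α → α → Prop) (x y : α) : ℕ :=
  {z : α | z ≠ x ∧ z ≠ y ∧ arc x z ∧ arc z y}.ncard

/-- Two elements of `ZMod (2*m)` have the same parity if their difference is
twice an element of `ZMod (2*m)`. -/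
def sameParity (m : ℕ) (x y : ZMod (2 * m)) : Prop :=
  ∃ c : ZMod (2 * m), x - y = 2 * c

/-- Three distinct vertices `x, y, z` induce a directed triangle:
the three arcs among them form a directed 3-cycle. -/
def dirTri {α : Type*} (arc : α → α → Prop) (x y z : α) : Prop :=
  x ≠ y ∧ y ≠ z ∧ x ≠ z ∧
    ((arc x y ∧ arc y z ∧ arc z x) ∨ (arc x z ∧ arc z y ∧ arc y x))

/-- The all-ones signature `1_m`. -/
def onesSig (m : ℕ) : Fin m → ZMod 2 := fun _ => 1

/-- The complementing register shift `R_1`: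
`uR_1 = (1 − u_{m−1}, u_0, u_1, …, u_{m−2})`. -/
def shift1 (m : ℕ) (u : Fin m → ZMod 2) : Fin m → ZMod 2 := fun i =>
  if (i : ℕ) = 0 then 1 - u ⟨m - 1, Nat.sub_lt i.pos Nat.one_pos⟩
  else u ⟨(i : ℕ) - 1, lt_of_le_of_lt (Nat.sub_le _ _) i.isLt⟩

/-- The inverse of the complementing register shift `R_1`:
`(uR_1⁻¹)_i = u_{i+1}` for `i < m−1` and `(uR_1⁻¹)_{m−1} = 1 − u_0`. -/
def unshift1 (m : ℕ) (u : Fin m → ZMod 2) : Fin m → ZMod 2 := fun i =>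
  if h : (i : ℕ) = m - 1 then 1 - u ⟨0, i.pos⟩
  else u ⟨(i : ℕ) + 1, by have h1 := i.isLt; omega⟩

/-- `R_t` for an integer `t`: the `t`-th iterate of the complementing register
shift `R_1` (inverse iterates when `t` is negative). `Rshift m t u = u R_t`. -/
def Rshift (m : ℕ) (t : ℤ) (u : Fin m → ZMod 2) : Fin m → ZMod 2 :=
  if 0 ≤ t then (shift1 m)^[t.toNat] u else (unshift1 m)^[(-t).toNat] u

/-- The permutation `σ = (0 1 2 ⋯ m−1)(n−1 n−2 ⋯ m)` of the vertex set:
it fixes `*`, maps `k ↦ k+1` for `0 ≤ k ≤ m−2`, `m−1 ↦ 0`,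
`k ↦ k−1` for `m+1 ≤ k ≤ n−1`, and `m ↦ n−1`. -/
def sigmaFun (m : ℕ) : WVert m → WVert m
  | none => none
  | some x =>
      if x.val < m then some ((((x.val + 1) % m : ℕ)) : ZMod (2 * m))
      else some (((m + (x.val - m + (m - 1)) % m : ℕ)) : ZMod (2 * m))

/-- The inverse of the permutation `σ`. -/
def sigmaInvFun (m : ℕ) : WVert m → WVert m
  | none => none
  | some x =>
      if x.val < m then some ((((x.val + (m - 1)) % m : ℕ)) : ZMod (2 * m))
      else some (((m + (x.val - m + 1) % m : ℕ)) : ZMod (2 * m))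

/-- `σ^t` for an integer `t`: the `t`-th iterate of `σ`
(inverse iterates when `t` is negative). -/
def sigmaZ (m : ℕ) (t : ℤ) : WVert m → WVert m :=
  if 0 ≤ t then (sigmaFun m)^[t.toNat] else (sigmaInvFun m)^[(-t).toNat]

/-!
Let `s` be the extension of the signature to `ℤ` by `s (j + m) = s j + 1`. For integers
`p < q < p + 2m` the arc between `p` and `q` points towards `q` exactly when
`s ⌊(p + q) / 2⌋ ≡ p + q mod 2`. Hence two vertices `p` and `p + Q` have the same relation to a
third vertex `p + t` exactly when an equation between `s (p + ⌊(Q + t) / 2⌋)` and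
`s (p + ⌊t / 2⌋)` holds.

If `u_{i+k} ≠ u_i` for all `i`, these equations show that `*` is the only vertex related
differently to `0` and `m`; call it the unique separator of `0` and `m`. To recognise `*` by this
property, suppose that in some Walecki tournament a vertex `w ≠ *` is the unique separator of two
vertices other than `*`. The equations then force `s` to be constant on `[w, w + m)`, and so, `m`
being even, `w + m` is the unique separator of `w` and `w + m - 1`. On the other hand, as
`m > 2` is even, no pair of vertices containing `*` has a unique separator. Hence an isomorphism
that maps `*` to `w` would, by its inverse, turn the pair `w`, `w + m - 1` into an impossible one.
-/

section ZModTwo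

lemma zmod_two_eq_add_one_iff {a b : ZMod 2} : a = b + 1 ↔ a ≠ b := by
  revert a b; decide

lemma zmod_two_eq_iff_eq_iff {a b c d : ZMod 2} : (a = b ↔ c = d) ↔ c = a + b + d := by
  revert a b c d; decide

end ZModTwo

section Separator

variable {α β : Type*} {R : α → α → Prop} {S : β → β → Prop} {w x y : α}

/-- Among the vertices other than `x` and `y`, the vertex `w` is the only one that is an
out-neighbour of exactly one of `x` and `y`. This notion is invariant under isomorphism, and is
used to tell the vertex `*` apart from all others. -/
structure UniqueSeparator (R : α → α → Prop) (w x y : α) : Prop where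
  ne : x ≠ y
  ne_left : w ≠ x
  ne_right : w ≠ y
  agree_iff : ∀ z, z ≠ x → z ≠ y → ((R x z ↔ R y z) ↔ z ≠ w)

namespace UniqueSeparator

lemma symm (h : UniqueSeparator R w x y) : UniqueSeparator R w y x :=
  ⟨h.ne.symm, h.ne_right, h.ne_left, fun z hy hx => iff_comm.trans (h.agree_iff z hx hy)⟩

lemma map (h : UniqueSeparator R w x y) (φ : R ≃r S) :
    UniqueSeparator S (φ w) (φ x) (φ y) := by
  refine ⟨φ.injective.ne h.ne, φ.injective.ne h.ne_left, φ.injective.ne h.ne_right, ?_⟩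
  intro z hx hy
  obtain ⟨z, rfl⟩ := φ.surjective z
  rw [φ.map_rel_iff, φ.map_rel_iff, φ.injective.ne_iff]
  exact h.agree_iff z (ne_of_apply_ne φ hx) (ne_of_apply_ne φ hy)

lemma dcount_eq_one (h : UniqueSeparator R w x y)
    (asymm : ∀ z, z ≠ x → R x z → ¬ R z x) (hyw : R y w) (hwx : R w x) :
    dcount R x y = 1 := by
  rw [dcount, Set.ncard_eq_one]
  refine ⟨w, Set.eq_singleton_iff_unique_mem.2 ⟨⟨h.ne_left, h.ne_right, hyw, hwx⟩, ?_⟩⟩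
  rintro z ⟨hzx, hzy, hyz, hz⟩
  by_contra hzw
  exact asymm z hzx (((h.agree_iff z hzx hzy).2 hzw).2 hyz) hz

end UniqueSeparator

end Separator

section ArcFormula

variable {m : ℕ}

lemma natCast_add_self_eq_zero : (m : ZMod (2 * m)) + m = 0 := by
  rw [← two_mul]
  exact_mod_cast ZMod.natCast_self (2 * m)

lemma two_dvd_of_natCast_eq_zero {a : ℕ} (h : (a : ZMod (2 * m)) = 0) : 2 ∣ a :=
  (dvd_mul_right 2 m).trans ((ZMod.natCast_eq_zero_iff a (2 * m)).1 h)

lemma cplus_none_some_iff {j y : ZMod (2 * m)} : Cplus m j none (some y) ↔ j = y := by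
  simp [Cplus, eq_comm]

lemma cplus_some_none_iff {j x : ZMod (2 * m)} : Cplus m j (some x) none ↔ j = x + m := by
  simp only [Cplus, Option.some.injEq, reduceCtorEq, and_false, and_true, false_or,
    or_false, exists_false]
  constructor <;> rintro rfl <;> rw [add_assoc, natCast_add_self_eq_zero, add_zero]

lemma cplus_some_add_odd_iff {j x : ZMod (2 * m)} {i : ℕ} (hi : i < m) :
    Cplus m j (some x) (some (x + 2 * i + 1)) ↔ j = x + i := by
  simp only [Cplus, Option.some.injEq, reduceCtorEq, false_and, and_false, false_or]
  constructor
  · rintro (⟨l, hl, hx, hy⟩ | ⟨l, -, -, hx, hy⟩)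
    · have hil : ((2 * i : ℕ) : ZMod (2 * m)) = (2 * l : ℕ) := by
        push_cast
        linear_combination hy - hx
      rw [ZMod.natCast_eq_natCast_iff', Nat.mod_eq_of_lt (by omega),
        Nat.mod_eq_of_lt (by omega)] at hil
      obtain rfl : i = l := by omega
      linear_combination -hx
    · have := two_dvd_of_natCast_eq_zero (m := m) (a := 2 * i + 2 * l + 1) (by
        push_cast
        linear_combination hy - hx)
      omega
  · rintro rfl
    exact Or.inl ⟨i, by omega, by ring, by ring⟩

lemma cplus_some_add_even_iff {j x : ZMod (2 * m)} {i : ℕ} (hi0 : 0 < i) (hi : i < m) :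
    Cplus m j (some x) (some (x + 2 * i)) ↔ j = x + i + m := by
  simp only [Cplus, Option.some.injEq, reduceCtorEq, false_and, and_false, false_or]
  have h2m := natCast_add_self_eq_zero (m := m)
  constructor
  · rintro (⟨l, -, hx, hy⟩ | ⟨l, hl0, hl, hx, hy⟩)
    · have := two_dvd_of_natCast_eq_zero (m := m) (a := 2 * (m - i) + 2 * l + 1) (by
        push_cast [Nat.cast_sub hi.le]
        linear_combination hx - hy + h2m)
      omega
    · have hil : ((2 * i : ℕ) : ZMod (2 * m)) = (2 * (m - l) : ℕ) := by
        rw [Nat.mul_sub, Nat.cast_sub (by omega)]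
        push_cast
        linear_combination hy - hx - h2m
      rw [ZMod.natCast_eq_natCast_iff', Nat.mod_eq_of_lt (by omega),
        Nat.mod_eq_of_lt (by omega)] at hil
      obtain rfl : i = m - l := by omega
      rw [Nat.cast_sub (by omega)]
      linear_combination -hx - h2m
  · rintro rfl
    refine Or.inr ⟨m - i, by omega, by omega, ?_, ?_⟩ <;> rw [Nat.cast_sub hi.le]
    · linear_combination -h2m
    · ring

lemma cplus_add_self [NeZero m] {j : ZMod (2 * m)} {x y : WVert m} (h : Cplus m j x y) :
    Cplus m (j + m) y x := by
  have h2m := natCast_add_self_eq_zero (m := m)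
  rcases h with ⟨rfl, rfl⟩ | ⟨rfl, rfl⟩ | ⟨l, hl, rfl, rfl⟩ | ⟨l, hl0, hl, rfl, rfl⟩
  · exact cplus_some_none_iff.2 rfl
  · exact cplus_none_some_iff.2 rfl
  · have hm : 1 ≤ m := NeZero.one_le
    refine Or.inr (Or.inr (Or.inl ⟨m - 1 - l, by omega, ?_, ?_⟩)) <;> congr 1 <;>
      push_cast [Nat.cast_sub hl, Nat.cast_sub hm]
    · ring
    · linear_combination -h2m
  · refine Or.inr (Or.inr (Or.inr ⟨m - l, by omega, by omega, ?_, ?_⟩)) <;> congr 1 <;>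
      push_cast [Nat.cast_sub (show l ≤ m by omega)]
    · linear_combination -h2m
    · ring

variable [NeZero m] {u : Fin m → ZMod 2}

/-- The extension of a signature `u` to all integers by the rule `u_{j+m} = 1 - u_j`. As
`C_{j+m}⁺` is the reverse of `C_j⁺`, the arcs of `W_u` are those of all `C_j⁺` with
`extSig u j = 1`, without any case distinction on the sign. -/
def extSig (u : Fin m → ZMod 2) (j : ℤ) : ZMod 2 :=
  u ⟨(j % m).toNat, by
    have := NeZero.pos m
    have := Int.emod_lt_of_pos j (b := m) (by omega)
    omega⟩ + (j / m : ℤ)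

lemma extSig_natCast {i : ℕ} (hi : i < m) : extSig u i = u ⟨i, hi⟩ := by
  have hmod : (i : ℤ) % m = i := Int.emod_eq_of_lt (by omega) (by omega)
  have hdiv : (i : ℤ) / m = 0 := Int.ediv_eq_zero_of_lt (by omega) (by omega)
  simp [extSig, hmod, hdiv]

lemma extSig_add_mul (j c : ℤ) : extSig u (j + c * m) = extSig u j + c := by
  have hm : (m : ℤ) ≠ 0 := by exact_mod_cast NeZero.ne m
  simp [extSig, Int.add_mul_ediv_right j c hm, add_assoc]

lemma extSig_add_self (j : ℤ) : extSig u (j + m) = extSig u j + 1 := by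
  simpa using extSig_add_mul (u := u) j 1

lemma extSig_eq_of_intCast_eq {i j : ℤ} (h : (i : ZMod (2 * m)) = j) :
    extSig u i = extSig u j := by
  obtain ⟨c, hc⟩ := (ZMod.intCast_eq_intCast_iff_dvd_sub i j (2 * m)).1 h
  have hj : j = i + 2 * c * m := by push_cast at hc; linear_combination hc
  simp [hj, extSig_add_mul, CharTwo.two_eq_zero]

lemma exists_eq_fin_add_mul (j : ℤ) : ∃ (i : Fin m) (c : ℤ), j = (i : ℕ) + c * m := by
  have hm : (0 : ℤ) < m := by exact_mod_cast NeZero.pos m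
  have hlt := Int.emod_lt_of_pos j hm
  have hnonneg := Int.emod_nonneg j hm.ne'
  refine ⟨⟨(j % m).toNat, by omega⟩, j / m, ?_⟩
  rw [Int.toNat_of_nonneg hnonneg, Int.emod_add_ediv_mul]

lemma warc_iff_exists_cplus {x y : WVert m} :
    warc m u x y ↔ ∃ j : ℤ, extSig u j = 1 ∧ Cplus m j x y := by
  have h2m := natCast_add_self_eq_zero (m := m)
  constructor
  · rintro ⟨i, ⟨hi, h⟩ | ⟨hi, h⟩⟩
    · exact ⟨(i : ℕ), by rw [extSig_natCast i.2, hi], by exact_mod_cast h⟩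
    · exact ⟨(i : ℕ) + m, by rw [extSig_add_self, extSig_natCast i.2, hi, zero_add],
        by exact_mod_cast cplus_add_self h⟩
  · rintro ⟨j, hj, h⟩
    obtain ⟨i, c, rfl⟩ : ∃ (i : Fin m) (c : ℤ), j = (i : ℕ) + c * m := exists_eq_fin_add_mul j
    rw [extSig_add_mul, extSig_natCast i.2] at hj
    rcases Int.even_or_odd' c with ⟨d, rfl | rfl⟩
    · refine ⟨i, Or.inl ⟨by simpa [CharTwo.two_eq_zero] using hj, ?_⟩⟩
      convert h using 1
      push_cast
      linear_combination -d * h2m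
    · refine ⟨i, Or.inr ⟨by simpa [CharTwo.two_eq_zero] using hj, ?_⟩⟩
      convert cplus_add_self h using 1
      push_cast
      linear_combination (-d - 1) * h2m

lemma warc_iff_extSig_eq_one {x y : WVert m} {a : ℤ}
    (h : ∀ j : ZMod (2 * m), Cplus m j x y ↔ j = a) : warc m u x y ↔ extSig u a = 1 := by
  simp only [warc_iff_exists_cplus, h]
  exact ⟨fun ⟨j, hj, hja⟩ => extSig_eq_of_intCast_eq hja ▸ hj, fun ha => ⟨a, ha, rfl⟩⟩

lemma warc_none_some_iff {y : ℤ} : warc m u none (some (y : ZMod (2 * m))) ↔ extSig u y = 1 :=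
  warc_iff_extSig_eq_one fun _ => cplus_none_some_iff

lemma warc_some_none_iff {x : ℤ} : warc m u (some (x : ZMod (2 * m))) none ↔ extSig u x = 0 := by
  rw [warc_iff_extSig_eq_one (a := x + m) fun j => by push_cast; exact cplus_some_none_iff,
    extSig_add_self, add_eq_right]

lemma warc_some_some_iff_of_lt {x y : ℤ} (hxy : x < y) (hyx : y < x + 2 * m) :
    warc m u (some (x : ZMod (2 * m))) (some (y : ZMod (2 * m))) ↔
      extSig u ((x + y) / 2) = x + y := by
  obtain ⟨i, rfl | rfl⟩ : ∃ i : ℕ, y = x + 2 * i ∨ y = x + 2 * i + 1 :=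
    ⟨((y - x) / 2).toNat, by omega⟩
  · rw [show (x + (x + 2 * i)) / 2 = x + i by omega,
      warc_iff_extSig_eq_one (a := x + i + m) fun j => by
        push_cast; exact cplus_some_add_even_iff (by omega) (by omega), extSig_add_self]
    simp only [Int.cast_add, Int.cast_mul, Int.cast_ofNat, CharTwo.two_eq_zero, zero_mul,
      add_zero, CharTwo.add_self_eq_zero, add_eq_right]
  · rw [show (x + (x + 2 * i + 1)) / 2 = x + i by omega,
      warc_iff_extSig_eq_one (a := x + i) fun j => by
        push_cast; exact cplus_some_add_odd_iff (by omega)]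
    simp [← add_assoc, CharTwo.two_eq_zero, CharTwo.add_self_eq_zero]

lemma warc_some_some_iff_of_gt {x y : ℤ} (hyx : y < x) (hxy : x < y + 2 * m) :
    warc m u (some (x : ZMod (2 * m))) (some (y : ZMod (2 * m))) ↔
      extSig u ((x + y) / 2) = x + y + 1 := by
  have hy : (y : ZMod (2 * m)) = (y + 2 * m : ℤ) := by
    push_cast
    linear_combination -natCast_add_self_eq_zero (m := m)
  rw [hy, warc_some_some_iff_of_lt hxy (by omega),
    show (x + (y + 2 * m)) / 2 = (x + y) / 2 + m by omega, extSig_add_self,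
    ← eq_sub_iff_add_eq]
  simp [CharTwo.two_eq_zero, add_assoc, CharTwo.sub_eq_add]

end ArcFormula

section Pattern

/-- The condition that `p + W` is the unique separator of `p` and `p + Q`, read off the
extended signature: `f j` stands for `extSig u (p + j)` and `t` for the vertex `p + t`. -/
structure SeparatorPattern (m : ℕ) (f : ℤ → ZMod 2) (Q W : ℤ) : Prop where
  add_self : ∀ j, f (j + m) = f j + 1
  pos : 0 < Q
  lt : Q < W
  lt_two_mul : W < 2 * m
  zero_eq : f 0 = f Q
  of_lt : ∀ t, 0 < t → t < Q → f ((Q + t) / 2) = f (t / 2) + Q + 1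
  of_gt_iff : ∀ t, Q < t → t < 2 * m → (f ((Q + t) / 2) = f (t / 2) + Q ↔ t ≠ W)

variable {m : ℕ} {f : ℤ → ZMod 2} {a b c W : ℤ}

lemma sum_range_shift_of_add_self (hf : ∀ j, f (j + m) = f j + 1) (h : ℕ) :
    ∑ i ∈ Finset.range m, f (h + i) = ∑ i ∈ Finset.range m, f i + h := by
  induction h with
  | zero => simp
  | succ h ih =>
    have hlast := Finset.sum_range_succ (fun i : ℕ => f (h + i)) m
    have hfirst := Finset.sum_range_succ' (fun i : ℕ => f (h + i)) m
    rw [hlast, ih, hf] at hfirst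
    push_cast at hfirst ⊢
    simp only [add_zero, ← add_assoc, add_right_comm (h : ℤ) _ 1] at hfirst ⊢
    linear_combination -hfirst

lemma eq_left_of_forall_succ_eq (hf : ∀ i, a ≤ i → i < b → f (i + 1) = f i) :
    ∀ i, a ≤ i → i ≤ b → f i = f a := by
  intro i hai
  induction i, hai using Int.leInduction with
  | base => exact fun _ => rfl
  | succ i hai ih => exact fun hib => (hf i hai (by omega)).trans (ih (by omega))

namespace SeparatorPattern

lemma apply_of_even_of_lt (h : SeparatorPattern m f (2 * c) W) {i : ℤ} (hi0 : 0 < i)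
    (hic : i < c) : f (c + i) = f i + 1 := by
  have hi := h.of_lt (2 * i) (by omega) (by omega)
  rw [show (2 * c + 2 * i) / 2 = c + i by omega, show 2 * i / 2 = i by omega] at hi
  simpa [CharTwo.two_eq_zero] using hi

/-- `2 * i` and `2 * i + 1` impose the same equation, and one of them is not `W`. -/
lemma apply_of_even_of_gt (h : SeparatorPattern m f (2 * c) W) {i : ℤ} (hci : c < i)
    (him : i < m) : f (c + i) = f i := by
  have heven := h.of_gt_iff (2 * i) (by omega) (by omega)
  have hodd := h.of_gt_iff (2 * i + 1) (by omega) (by omega)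
  rw [show (2 * c + 2 * i) / 2 = c + i by omega, show 2 * i / 2 = i by omega] at heven
  rw [show (2 * c + (2 * i + 1)) / 2 = c + i by omega,
    show (2 * i + 1) / 2 = i by omega] at hodd
  have hi : f (c + i) = f i + (2 * c : ℤ) := by
    by_cases hW : 2 * i = W
    · exact hodd.2 (by omega)
    · exact heven.2 hW
  simpa [CharTwo.two_eq_zero] using hi

/-- The last two terms collect the equations missing from the pattern at `i = 0` and `i = c`. -/
lemma apply_add_of_even {c : ℕ} (h : SeparatorPattern m f (2 * c) W) {i : ℕ} (him : i < m) :
    f (c + i) = f i + (if i < c then 1 else 0) +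
      (if i = 0 then f 0 + f c + 1 else 0) + (if i = c then f 0 + f c else 0) := by
  have hpos := h.pos
  rcases lt_trichotomy i c with hic | rfl | hic
  · rcases i.eq_zero_or_pos with rfl | hi0
    · simp only [hic, hic.ne, if_true, if_false, Nat.cast_zero, add_zero]
      generalize f c = x, f 0 = y
      revert x y; decide
    · simp [hic, hic.ne, hi0.ne', h.apply_of_even_of_lt (i := i) (by omega) (by omega)]
  · have hi0 : i ≠ 0 := by omega
    simp only [hi0, lt_irrefl, if_true, if_false, add_zero, ← two_mul, ← h.zero_eq]
    generalize f i = x, f 0 = y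
    revert x y; decide
  · simp [hic.not_gt, hic.ne', (hic.trans_le' c.zero_le).ne',
      h.apply_of_even_of_gt (i := i) (by omega) (by omega)]

/-- Summing `f (Q / 2 + i) - f i` over a half-period gives `Q / 2` by antiperiodicity, but
`Q / 2 - 1` according to the pattern. -/
lemma not_even {Q : ℤ} (h : SeparatorPattern m f Q W) : ¬ Even Q := by
  rw [even_iff_exists_two_mul]
  rintro ⟨c, rfl⟩
  have hpos := h.pos
  have hlt := h.lt
  have hltm := h.lt_two_mul
  lift c to ℕ using by omega
  have hcard : ∑ i ∈ Finset.range m, (if i < c then (1 : ZMod 2) else 0) = c := by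
    have hfilter : {i ∈ Finset.range m | i < c} = Finset.range c := by
      ext i
      simp only [Finset.mem_filter, Finset.mem_range]
      omega
    rw [Finset.sum_boole, hfilter, Finset.card_range]
  have hsum := Finset.sum_congr rfl fun i hi => h.apply_add_of_even (Finset.mem_range.1 hi)
  simp only [sum_range_shift_of_add_self h.add_self, Finset.sum_add_distrib, hcard,
    Finset.sum_ite_eq', Finset.mem_range, show 0 < m by omega, show c < m by omega, if_true,
    add_assoc, add_right_inj, left_eq_add] at hsum
  revert hsum
  generalize f c = x, f 0 = y
  revert x y; decide

lemma apply_of_odd_of_lt (h : SeparatorPattern m f (2 * c + 1) W) {i : ℤ} (hi0 : 0 < i)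
    (hic : i ≤ c) : f (c + i) = f i := by
  have hi := h.of_lt (2 * i) (by omega) (by omega)
  rw [show (2 * c + 1 + 2 * i) / 2 = c + i by omega, show 2 * i / 2 = i by omega] at hi
  simpa [CharTwo.two_eq_zero, add_assoc, CharTwo.add_self_eq_zero] using hi

lemma apply_succ_of_odd_of_lt (h : SeparatorPattern m f (2 * c + 1) W) {i : ℤ} (hi0 : 0 ≤ i)
    (hic : i < c) : f (c + i + 1) = f i := by
  have hi := h.of_lt (2 * i + 1) (by omega) (by omega)
  rw [show (2 * c + 1 + (2 * i + 1)) / 2 = c + i + 1 by omega,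
    show (2 * i + 1) / 2 = i by omega] at hi
  simpa [CharTwo.two_eq_zero, add_assoc, CharTwo.add_self_eq_zero] using hi

lemma apply_of_odd_of_gt_iff (h : SeparatorPattern m f (2 * c + 1) W) {i : ℤ} (hci : c < i)
    (him : i < m) : f (c + i) = f i + 1 ↔ 2 * i ≠ W := by
  rw [← h.of_gt_iff (2 * i) (by omega) (by omega),
    show (2 * c + 1 + 2 * i) / 2 = c + i by omega, show 2 * i / 2 = i by omega]
  simp [CharTwo.two_eq_zero]

lemma apply_succ_of_odd_of_gt_iff (h : SeparatorPattern m f (2 * c + 1) W) {i : ℤ}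
    (hci : c < i) (him : i < m) : f (c + i + 1) = f i + 1 ↔ 2 * i + 1 ≠ W := by
  rw [← h.of_gt_iff (2 * i + 1) (by omega) (by omega),
    show (2 * c + 1 + (2 * i + 1)) / 2 = c + i + 1 by omega,
    show (2 * i + 1) / 2 = i by omega]
  simp [CharTwo.two_eq_zero]

lemma apply_eq_apply_zero_of_le_of_odd (h : SeparatorPattern m f (2 * c + 1) W) {i : ℤ}
    (hi0 : 0 ≤ i) (hi : i ≤ 2 * c + 1) : f i = f 0 := by
  have hstep : ∀ i, c + 1 ≤ i → i < 2 * c → f (i + 1) = f i := fun i hci hic => by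
    have heven := h.apply_of_odd_of_lt (i := i - c) (by omega) (by omega)
    have hodd := h.apply_succ_of_odd_of_lt (i := i - c) (by omega) (by omega)
    rw [← heven, add_sub_cancel] at hodd
    exact hodd
  have hupper : ∀ i, c < i → i ≤ 2 * c → f i = f 0 := fun i hci hic =>
    (eq_left_of_forall_succ_eq hstep i hci hic).trans
      (by simpa using h.apply_succ_of_odd_of_lt le_rfl (by omega))
  rcases hi0.eq_or_lt with rfl | hi0
  · rfl
  rcases hi.eq_or_lt with rfl | hi
  · exact h.zero_eq.symm
  rcases lt_or_ge c i with hci | hic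
  · exact hupper i hci (by omega)
  · rw [← h.apply_of_odd_of_lt hi0 hic]
    exact hupper _ (by omega) (by omega)

lemma separator_eq_two_mul_add_two_of_odd (h : SeparatorPattern m f (2 * c + 1) W) :
    W = 2 * c + 2 := by
  have hpos := h.pos
  have hlt := h.lt
  have hltm := h.lt_two_mul
  by_contra hW
  have hc := (h.apply_of_odd_of_gt_iff (i := c + 1) (by omega) (by omega)).2 (by omega)
  rw [h.apply_eq_apply_zero_of_le_of_odd (by omega) (by omega),
    h.apply_eq_apply_zero_of_le_of_odd (i := c + 1) (by omega) (by omega)] at hc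
  simp at hc

lemma apply_eq_apply_zero_add_one_of_odd (h : SeparatorPattern m f (2 * c + 1) W) {i : ℤ}
    (hci : 2 * c + 2 ≤ i) (hi : i ≤ c + m) : f i = f 0 + 1 := by
  have hpos := h.pos
  have hW := h.separator_eq_two_mul_add_two_of_odd
  have hstep : ∀ i, 2 * c + 2 ≤ i → i < c + m → f (i + 1) = f i := fun i hci him => by
    have heven := (h.apply_of_odd_of_gt_iff (i := i - c) (by omega) (by omega)).2 (by omega)
    have hodd := (h.apply_succ_of_odd_of_gt_iff (i := i - c) (by omega) (by omega)).2 (by omega)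
    rw [← heven, add_sub_cancel] at hodd
    exact hodd
  have hconst := eq_left_of_forall_succ_eq hstep
  rw [hconst i hci hi, ← hconst (c + m) (by omega) le_rfl, h.add_self,
    h.apply_eq_apply_zero_of_le_of_odd (by omega) (by omega)]

lemma apply_eq_apply_zero_of_lt_of_odd (h : SeparatorPattern m f (2 * c + 1) W) {i : ℤ}
    (hi0 : 0 ≤ i) (him : i < m) : f i = f 0 := by
  have hW := h.separator_eq_two_mul_add_two_of_odd
  rcases le_or_gt i c with hic | hci
  · exact h.apply_eq_apply_zero_of_le_of_odd hi0 (by omega)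
  · have hi := (h.apply_succ_of_odd_of_gt_iff hci him).2 (by omega)
    rw [h.apply_eq_apply_zero_add_one_of_odd (by omega) (by omega)] at hi
    exact (add_right_cancel hi).symm

lemma separator_eq_of_odd (h : SeparatorPattern m f (2 * c + 1) W) : W = m := by
  have hpos := h.pos
  have hW := h.separator_eq_two_mul_add_two_of_odd
  have hltm := h.lt_two_mul
  rcases lt_trichotomy W m with hlt | heq | hgt
  · have hright := h.apply_eq_apply_zero_add_one_of_odd (i := W) (by omega) (by omega)
    rw [h.apply_eq_apply_zero_of_lt_of_odd (by omega) hlt] at hright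
    simp at hright
  · exact heq
  · have hm := h.apply_eq_apply_zero_of_le_of_odd (i := m) (by omega) (by omega)
    have hm' := h.add_self 0
    rw [zero_add, hm] at hm'
    simp at hm'

lemma separator_eq_and_apply_eq {Q : ℤ} (h : SeparatorPattern m f Q W) :
    W = m ∧ ∀ i : ℤ, 0 ≤ i → i < m → f i = f 0 := by
  obtain ⟨c, rfl⟩ := Int.not_even_iff_odd.1 h.not_even
  exact ⟨h.separator_eq_of_odd, fun i hi0 him => h.apply_eq_apply_zero_of_lt_of_odd hi0 him⟩

end SeparatorPattern

end Pattern

section Walecki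

variable {m : ℕ}

lemma some_intCast_ne {x y : ℤ} (hxy : x < y) (hyx : y < x + 2 * m) :
    some (x : ZMod (2 * m)) ≠ some (y : ZMod (2 * m)) := by
  rw [ne_eq, Option.some_inj, ZMod.intCast_eq_intCast_iff_dvd_sub]
  intro hdvd
  have := Int.le_of_dvd (by omega) hdvd
  push_cast at this
  omega

variable [NeZero m] {u : Fin m → ZMod 2}

lemma exists_eq_intCast_add (p : ℤ) (z : ZMod (2 * m)) :
    ∃ t : ℤ, 0 ≤ t ∧ t < 2 * m ∧ z = ((p + t : ℤ) : ZMod (2 * m)) := by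
  refine ⟨((z - (p : ZMod (2 * m))).val : ℕ), by omega, by exact_mod_cast ZMod.val_lt _, ?_⟩
  simp

lemma warc_asymm {x y : WVert m} (hxy : x ≠ y) (h : warc m u x y) : ¬ warc m u y x := by
  rcases x with _ | x <;> rcases y with _ | y
  · exact absurd rfl hxy
  · obtain ⟨y, rfl⟩ := ZMod.intCast_surjective y
    rw [warc_none_some_iff] at h
    simp [warc_some_none_iff, h]
  · obtain ⟨x, rfl⟩ := ZMod.intCast_surjective x
    rw [warc_some_none_iff] at h
    simp [warc_none_some_iff, h]
  · obtain ⟨x, rfl⟩ := ZMod.intCast_surjective x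
    obtain ⟨t, ht0, htm, rfl⟩ := exists_eq_intCast_add x y
    have ht : t ≠ 0 := by rintro rfl; simp at hxy
    rw [warc_some_some_iff_of_lt (by omega) (by omega)] at h
    rw [warc_some_some_iff_of_gt (by omega) (by omega), add_comm (x + t), h]
    push_cast
    simp [add_comm]

lemma warc_agree_none_iff {x y : ℤ} :
    (warc m u (some (x : ZMod (2 * m))) none ↔ warc m u (some (y : ZMod (2 * m))) none) ↔
      extSig u x = extSig u y := by
  rw [warc_some_none_iff, warc_some_none_iff, zmod_two_eq_iff_eq_iff, eq_comm, add_zero, add_zero]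

lemma warc_agree_none_left_iff {y z : ℤ} (hyz : y < z) (hzy : z < y + 2 * m) :
    (warc m u none (some (z : ZMod (2 * m))) ↔
      warc m u (some (y : ZMod (2 * m))) (some (z : ZMod (2 * m)))) ↔
      extSig u z = extSig u ((y + z) / 2) + (z - y : ℤ) + 1 := by
  rw [warc_none_some_iff, warc_some_some_iff_of_lt hyz hzy, zmod_two_eq_iff_eq_iff]
  push_cast
  generalize extSig u ((y + z) / 2) = a, extSig u z = b, (y : ZMod 2) = y', (z : ZMod 2) = z'
  revert a b y' z'; decide

lemma warc_agree_iff_of_between {x y z : ℤ} (hxz : x < z) (hzy : z < y) (hyx : y < x + 2 * m) :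
    (warc m u (some (x : ZMod (2 * m))) (some (z : ZMod (2 * m))) ↔
      warc m u (some (y : ZMod (2 * m))) (some (z : ZMod (2 * m)))) ↔
      extSig u ((y + z) / 2) = extSig u ((x + z) / 2) + (y - x : ℤ) + 1 := by
  rw [warc_some_some_iff_of_lt hxz (by omega), warc_some_some_iff_of_gt hzy (by omega),
    zmod_two_eq_iff_eq_iff]
  push_cast
  generalize extSig u ((x + z) / 2) = a, extSig u ((y + z) / 2) = b, (x : ZMod 2) = x',
    (y : ZMod 2) = y', (z : ZMod 2) = z'
  revert a b x' y' z'; decide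

lemma warc_agree_iff_of_lt {x y z : ℤ} (hxy : x < y) (hyz : y < z) (hzx : z < x + 2 * m) :
    (warc m u (some (x : ZMod (2 * m))) (some (z : ZMod (2 * m))) ↔
      warc m u (some (y : ZMod (2 * m))) (some (z : ZMod (2 * m)))) ↔
      extSig u ((y + z) / 2) = extSig u ((x + z) / 2) + (y - x : ℤ) := by
  rw [warc_some_some_iff_of_lt (hxy.trans hyz) hzx, warc_some_some_iff_of_lt hyz (by omega),
    zmod_two_eq_iff_eq_iff]
  push_cast
  generalize extSig u ((x + z) / 2) = a, extSig u ((y + z) / 2) = b, (x : ZMod 2) = x',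
    (y : ZMod 2) = y', (z : ZMod 2) = z'
  revert a b x' y' z'; decide

lemma uniqueSeparator_warc_iff {p q : ℤ} {w : WVert m} (hpq : p < q) (hqp : q < p + 2 * m)
    (hwp : w ≠ some (p : ZMod (2 * m))) (hwq : w ≠ some (q : ZMod (2 * m))) :
    UniqueSeparator (warc m u) w (some (p : ZMod (2 * m))) (some (q : ZMod (2 * m))) ↔
      (extSig u p = extSig u q ↔ none ≠ w) ∧
      (∀ z, p < z → z < q → (extSig u ((q + z) / 2) = extSig u ((p + z) / 2) + (q - p : ℤ) + 1 ↔
        some (z : ZMod (2 * m)) ≠ w)) ∧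
      (∀ z, q < z → z < p + 2 * m →
        (extSig u ((q + z) / 2) = extSig u ((p + z) / 2) + (q - p : ℤ) ↔
          some (z : ZMod (2 * m)) ≠ w)) := by
  constructor
  · refine fun h => ⟨?_, fun z hpz hzq => ?_, fun z hqz hzp => ?_⟩
    · rw [← warc_agree_none_iff]
      exact h.agree_iff none (by simp) (by simp)
    · rw [← warc_agree_iff_of_between hpz hzq hqp]
      exact h.agree_iff _ (some_intCast_ne hpz (by omega)).symm
        (some_intCast_ne hzq (by omega))
    · rw [← warc_agree_iff_of_lt hpq hqz hzp]
      exact h.agree_iff _ (some_intCast_ne (hpq.trans hqz) hzp).symm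
        (some_intCast_ne hqz (by omega)).symm
  · rintro ⟨hnone, hbetween, hbeyond⟩
    refine ⟨some_intCast_ne hpq hqp, hwp, hwq, ?_⟩
    rintro (_ | z) hzp hzq
    · exact warc_agree_none_iff.trans hnone
    obtain ⟨t, ht0, htm, rfl⟩ := exists_eq_intCast_add p z
    have ht0' : t ≠ 0 := by rintro rfl; simp at hzp
    rcases lt_trichotomy (p + t) q with hlt | rfl | hgt
    · exact (warc_agree_iff_of_between (by omega) hlt hqp).trans (hbetween _ (by omega) hlt)
    · exact absurd rfl hzq
    · exact (warc_agree_iff_of_lt hpq hgt (by omega)).trans (hbeyond _ hgt (by omega))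

lemma not_uniqueSeparator_none_left (hm : Even m) (hm2 : 2 < m) {w y : WVert m} :
    ¬ UniqueSeparator (warc m u) w none y := by
  intro h
  obtain ⟨y, rfl⟩ := Option.ne_none_iff_exists'.1 h.ne.symm
  obtain ⟨p, rfl⟩ := ZMod.intCast_surjective y
  obtain ⟨k, rfl⟩ := even_iff_exists_two_mul.1 hm
  have hagree (t : ℤ) (ht0 : 0 < t) (htm : t < 4 * k) :
      extSig u (p + t) = extSig u (p + t / 2) + t + 1 ↔
        some ((p + t : ℤ) : ZMod (2 * (2 * k))) ≠ w := by
    have hpt : p < p + t := by omega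
    have htp : p + t < p + 2 * (2 * k : ℕ) := by omega
    rw [← h.agree_iff _ (by simp) (some_intCast_ne hpt htp).symm,
      warc_agree_none_left_iff hpt htp, show (p + (p + t)) / 2 = p + t / 2 by omega,
      add_sub_cancel_left]
  have hper (t : ℤ) : extSig u (p + (t + 2 * k)) = extSig u (p + t) + 1 := by
    simpa [add_assoc] using extSig_add_self (u := u) (p + t)
  have hw : w = some ((p + (2 * k - 1 + 2 * k) : ℤ) : ZMod (2 * (2 * k))) := by
    by_contra hne
    have hlast := (hagree (2 * k - 1 + 2 * k) (by omega) (by omega)).2 (Ne.symm hne)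
    rw [hper, show (2 * (k : ℤ) - 1 + 2 * k) / 2 = 2 * k - 1 by omega] at hlast
    simp [CharTwo.two_eq_zero] at hlast
  have heq (t : ℤ) (ht0 : 0 < t) (htk : t < 2 * k - 1 + 2 * k) :
      extSig u (p + t) = extSig u (p + t / 2) + t + 1 :=
    (hagree t ht0 (by omega)).2 (hw ▸ some_intCast_ne (by omega) (by push_cast; omega))
  have h₁ := heq (2 * k - 2 + 2 * k) (by omega) (by omega)
  have h₂ := heq (2 * k - 2) (by omega) (by omega)
  have h₃ := heq (2 * k - 1) (by omega) (by omega)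
  rw [hper, show (2 * (k : ℤ) - 2 + 2 * k) / 2 = 2 * k - 1 by omega] at h₁
  rw [show (2 * (k : ℤ) - 2) / 2 = k - 1 by omega] at h₂
  rw [show (2 * (k : ℤ) - 1) / 2 = k - 1 by omega] at h₃
  rw [h₂, h₃] at h₁
  simp [CharTwo.two_eq_zero] at h₁

lemma separatorPattern_of_uniqueSeparator {p q w : ℤ} (hpq : p < q) (hqw : q < w)
    (hwp : w < p + 2 * m)
    (h : UniqueSeparator (warc m u) (some (w : ZMod (2 * m))) (some (p : ZMod (2 * m)))
      (some (q : ZMod (2 * m)))) :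
    SeparatorPattern m (fun j => extSig u (p + j)) (q - p) (w - p) := by
  obtain ⟨hnone, hbetween, hbeyond⟩ := (uniqueSeparator_warc_iff hpq (by omega)
    (some_intCast_ne (by omega) hwp).symm (some_intCast_ne hqw (by omega)).symm).1 h
  have hdiv (r t : ℤ) : (r + (p + t)) / 2 = p + (r - p + t) / 2 := by omega
  refine ⟨fun j => ?_, by omega, by omega, by omega, ?_, fun t ht htq => ?_, fun t htq htm => ?_⟩
  · rw [← add_assoc, extSig_add_self]
  · simpa using hnone
  · have ht := (hbetween (p + t) (by omega) (by omega)).2 (some_intCast_ne (by omega) (by omega))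
    simpa [hdiv] using ht
  · have ht := hbeyond (p + t) (by omega) (by omega)
    rw [hdiv, hdiv, sub_self, zero_add] at ht
    rw [ht, not_iff_not]
    constructor
    · intro heq
      by_contra hne
      rcases lt_or_gt_of_ne hne with hlt | hgt
      · exact some_intCast_ne (by omega) (by omega) heq
      · exact some_intCast_ne (by omega) (by omega) heq.symm
    · rintro rfl
      simp

lemma extSig_add_eq_of_uniqueSeparator {p q w : ℤ} (hpq : p < q) (hqw : q < w)
    (hwp : w < p + 2 * m)
    (h : UniqueSeparator (warc m u) (some (w : ZMod (2 * m))) (some (p : ZMod (2 * m)))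
      (some (q : ZMod (2 * m)))) {i : ℤ} (hi0 : 0 ≤ i) (him : i < m) :
    extSig u (w + i) = extSig u w := by
  obtain ⟨hw, hconst⟩ :=
    (separatorPattern_of_uniqueSeparator hpq hqw hwp h).separator_eq_and_apply_eq
  obtain rfl : w = p + m := by omega
  have hi := hconst i hi0 him
  simp only [add_zero] at hi
  rw [add_right_comm, extSig_add_self, hi, extSig_add_self]

lemma exists_extSig_add_eq_of_uniqueSeparator {p q w : ZMod (2 * m)}
    (h : UniqueSeparator (warc m u) (some w) (some p) (some q)) :
    ∃ c : ℤ, w = c ∧ ∀ i : ℤ, 0 ≤ i → i < m → extSig u (c + i) = extSig u c := by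
  obtain ⟨p, rfl⟩ := ZMod.intCast_surjective p
  obtain ⟨a, ha0, ham, rfl⟩ := exists_eq_intCast_add p q
  obtain ⟨b, hb0, hbm, rfl⟩ := exists_eq_intCast_add p w
  have ha : a ≠ 0 := by rintro rfl; simpa using h.ne
  have hb : b ≠ 0 := by rintro rfl; simpa using h.ne_left
  have hab : a ≠ b := by rintro rfl; exact h.ne_right rfl
  have h2m (x : ℤ) : ((x + 2 * m : ℤ) : ZMod (2 * m)) = x := by
    push_cast
    linear_combination natCast_add_self_eq_zero (m := m)
  rcases lt_or_gt_of_ne hab with hlt | hgt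
  · exact ⟨p + b, rfl, fun i => extSig_add_eq_of_uniqueSeparator (by omega) (by omega) (by omega) h⟩
  · have hsymm := h.symm
    rw [← h2m p, ← h2m (p + b)] at hsymm
    exact ⟨p + b + 2 * m, (h2m _).symm,
      fun i => extSig_add_eq_of_uniqueSeparator (by omega) (by omega) (by omega) hsymm⟩

lemma uniqueSeparator_of_extSig_add_eq (hm : Even m) {c : ℤ}
    (hc : ∀ i : ℤ, 0 ≤ i → i < m → extSig u (c + i) = extSig u c) :
    UniqueSeparator (warc m u) (some ((c + m : ℤ) : ZMod (2 * m))) (some (c : ZMod (2 * m)))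
      (some ((c + (m - 1) : ℤ) : ZMod (2 * m))) := by
  obtain ⟨k, rfl⟩ := even_iff_exists_two_mul.1 hm
  have hk : 0 < 2 * k := NeZero.pos _
  rw [uniqueSeparator_warc_iff (by omega) (by omega) (some_intCast_ne (by omega) (by omega)).symm
    (some_intCast_ne (by omega) (by omega)).symm]
  have hlow {j : ℤ} (hcj : c ≤ j) (hjc : j < c + 2 * k) : extSig u j = extSig u c := by
    simpa using hc (j - c) (by omega) (by omega)
  have hhigh {j : ℤ} (hcj : c + 2 * k ≤ j) (hjc : j < c + 4 * k) :
      extSig u j = extSig u c + 1 := by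
    simpa [hlow (j := j - 2 * k) (by omega) (by omega)] using extSig_add_self (u := u) (j - 2 * k)
  have hodd : ((c + ((2 * k : ℕ) - 1) - c : ℤ) : ZMod 2) = 1 := by simp [CharTwo.two_eq_zero]
  rw [hodd]
  refine ⟨by simpa using (hlow (by omega) (by omega)).symm, fun z hz hz' => ?_, fun z hz hz' => ?_⟩
  · rw [hlow (j := (c + z) / 2) (by omega) (by omega), hlow (by omega) (by omega), add_assoc,
      CharTwo.add_self_eq_zero, add_zero, eq_self, true_iff]
    exact some_intCast_ne (by omega) (by omega)
  · rw [hlow (j := (c + z) / 2) (by omega) (by omega)]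
    obtain rfl | hgt : z = c + (2 * k : ℕ) ∨ c + (2 * k : ℕ) < z := by omega
    · rw [hlow (by omega) (by omega)]
      simp
    · rw [hhigh (by omega) (by omega), eq_self, true_iff]
      exact (some_intCast_ne hgt (by omega)).symm

lemma map_none_eq_none (hm : Even m) (hm2 : 2 < m) {v : Fin m → ZMod 2}
    (φ : warc m u ≃r warc m v) {x y : WVert m} (h : UniqueSeparator (warc m u) none x y) :
    φ none = none := by
  have hφ := h.map φ
  have hne {z z' : WVert m} (hz : UniqueSeparator (warc m v) (φ none) z z') : z ≠ none := by
    rintro rfl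
    exact not_uniqueSeparator_none_left hm hm2 hz
  obtain ⟨p, hp⟩ := Option.ne_none_iff_exists'.1 (hne hφ)
  obtain ⟨q, hq⟩ := Option.ne_none_iff_exists'.1 (hne hφ.symm)
  by_contra hnone
  obtain ⟨w, hw⟩ := Option.ne_none_iff_exists'.1 hnone
  rw [hp, hq, hw] at hφ
  obtain ⟨c, rfl, hc⟩ := exists_extSig_add_eq_of_uniqueSeparator hφ
  have hback := (uniqueSeparator_of_extSig_add_eq hm hc).map φ.symm
  rw [← hw, φ.symm_apply_apply] at hback
  exact not_uniqueSeparator_none_left hm hm2 hback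

section HalfPeriod

variable {k : ℕ} [NeZero (2 * k)] {u : Fin (2 * k) → ZMod 2}

lemma extSig_add_half (hu : ∀ i : ℕ, (hi : i < k) → u ⟨i + k, by omega⟩ ≠ u ⟨i, by omega⟩)
    {i : ℤ} (hi0 : 0 ≤ i) (hik : i < k) : extSig u (i + k) = extSig u i + 1 := by
  lift i to ℕ using hi0
  have hik' : i < k := by exact_mod_cast hik
  rw [extSig_natCast (by omega), zmod_two_eq_add_one_iff, ← Nat.cast_add,
    extSig_natCast (by omega)]
  exact hu i hik'

lemma uniqueSeparator_none_zero_half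
    (hu : ∀ i : ℤ, 0 ≤ i → i < k → extSig u (i + k) = extSig u i + 1) :
    UniqueSeparator (warc (2 * k) u) none (some 0)
      (some ((2 * k : ℕ) : ZMod (2 * (2 * k)))) := by
  have hk : 0 < 2 * k := NeZero.pos _
  rw [← Int.cast_zero, ← Int.cast_natCast,
    uniqueSeparator_warc_iff (by omega) (by omega) (by simp) (by simp)]
  refine ⟨?_, fun z hz hz' => ?_, fun z hz hz' => ?_⟩
  · rw [← zero_add ((2 * k : ℕ) : ℤ), extSig_add_self]
    simp
  · rw [zero_add, show (((2 * k : ℕ) : ℤ) + z) / 2 = z / 2 + k by omega,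
      hu _ (by omega) (by omega)]
    simp [CharTwo.two_eq_zero]
  · have hhalf := hu (z / 2 - k) (by omega) (by omega)
    rw [sub_add_cancel] at hhalf
    rw [zero_add, hhalf, show (((2 * k : ℕ) : ℤ) + z) / 2 = z / 2 - k + (2 * k : ℕ) by omega,
      extSig_add_self]
    simp [CharTwo.two_eq_zero]

lemma warc_none_of_warc_zero_half (hk : extSig u k = extSig u 0 + 1)
    (h : warc (2 * k) u (some 0) (some ((2 * k : ℕ) : ZMod (2 * (2 * k))))) :
    warc (2 * k) u (some ((2 * k : ℕ) : ZMod (2 * (2 * k)))) none ∧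
      warc (2 * k) u none (some 0) := by
  have hpos : 0 < 2 * k := NeZero.pos _
  have hper : extSig u (2 * k : ℕ) = extSig u 0 + 1 := by
    simpa only [zero_add] using extSig_add_self (u := u) 0
  rw [← Int.cast_zero, ← Int.cast_natCast] at h ⊢
  rw [warc_some_some_iff_of_lt (by omega) (by omega),
    show (0 + ((2 * k : ℕ) : ℤ)) / 2 = k by omega, hk] at h
  rw [warc_some_none_iff, warc_none_some_iff]
  have h0 : extSig u 0 = 1 := by simpa [CharTwo.two_eq_zero, CharTwo.add_eq_zero] using h
  exact ⟨by rw [hper, h0, CharTwo.add_self_eq_zero], h0⟩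

lemma warc_none_of_warc_half_zero (hk : extSig u k = extSig u 0 + 1)
    (h : warc (2 * k) u (some ((2 * k : ℕ) : ZMod (2 * (2 * k)))) (some 0)) :
    warc (2 * k) u (some 0) none ∧
      warc (2 * k) u none (some ((2 * k : ℕ) : ZMod (2 * (2 * k)))) := by
  have hpos : 0 < 2 * k := NeZero.pos _
  have hper : extSig u (2 * k : ℕ) = extSig u 0 + 1 := by
    simpa only [zero_add] using extSig_add_self (u := u) 0
  rw [← Int.cast_zero, ← Int.cast_natCast] at h ⊢
  rw [warc_some_some_iff_of_gt (by omega) (by omega),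
    show (((2 * k : ℕ) : ℤ) + 0) / 2 = k by omega, hk] at h
  rw [warc_some_none_iff, warc_none_some_iff]
  have h0 : extSig u 0 = 0 := by simpa [CharTwo.two_eq_zero] using h
  exact ⟨h0, by rw [hper, h0, zero_add]⟩

end HalfPeriod

end Walecki

/-- Let `m = 2k` with `k ≥ 3`, and let `u` be a signature with
`u_{i+k} ≠ u_i` for all `0 ≤ i ≤ k−1`. Then the arc `a` of `W_u` between the
vertices `0` and `m` satisfies `d(a) = 1`; consequently every automorphism of
`W_u` fixes `*`, and any isomorphism from `W_u` to another Walecki tournament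
`W_v` maps `*` to `*`. -/
theorem walecki_stmt18 (k : ℕ) (hk : 3 ≤ k) (u : Fin (2 * k) → ZMod 2)
    (hu : ∀ i : ℕ, (hi : i ≤ k - 1) →
      u ⟨i + k, by omega⟩ ≠ u ⟨i, by omega⟩)
    (x y : WVert (2 * k))
    (hxy : (x = some 0 ∧ y = some ((2 * k : ℕ) : ZMod (2 * (2 * k)))) ∨
           (x = some ((2 * k : ℕ) : ZMod (2 * (2 * k))) ∧ y = some 0))
    (ha : warc (2 * k) u x y) :
    dcount (warc (2 * k) u) x y = 1 ∧
    ∀ (v : Fin (2 * k) → ZMod 2) (φ : WVert (2 * k) → WVert (2 * k)),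
      Function.Bijective φ →
      (∀ a b : WVert (2 * k), warc (2 * k) u a b ↔ warc (2 * k) v (φ a) (φ b)) →
      φ none = none := by
  have : NeZero (2 * k) := ⟨by omega⟩
  have hhalf (i : ℤ) (hi0 : 0 ≤ i) (hik : i < k) : extSig u (i + k) = extSig u i + 1 :=
    extSig_add_half (fun i hi => hu i (by omega)) hi0 hik
  have hk0 : extSig u k = extSig u 0 + 1 := by simpa using hhalf 0 le_rfl (by omega)
  have hsep : UniqueSeparator (warc (2 * k) u) none x y := by
    rcases hxy with ⟨rfl, rfl⟩ | ⟨rfl, rfl⟩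
    · exact uniqueSeparator_none_zero_half hhalf
    · exact (uniqueSeparator_none_zero_half hhalf).symm
  obtain ⟨hy, hx⟩ : warc (2 * k) u y none ∧ warc (2 * k) u none x := by
    rcases hxy with ⟨rfl, rfl⟩ | ⟨rfl, rfl⟩
    · exact warc_none_of_warc_zero_half hk0 ha
    · exact warc_none_of_warc_half_zero hk0 ha
  refine ⟨hsep.dcount_eq_one (fun z hzx => warc_asymm hzx.symm) hy hx, fun v φ hφ hiso => ?_⟩
  let ψ : warc (2 * k) u ≃r warc (2 * k) v := ⟨Equiv.ofBijective φ hφ, (hiso _ _).symm⟩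
  exact map_none_eq_none (even_two_mul k) (by omega) ψ hsep
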